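/- arXiv:0811.1966 — 5 statements merged into one kernel-verified Lean document; each statement's English description precedes it below -/
import Mathlib

section
/- Let $G$ be an abelian topological group and $x \in G$. The following are equivalent: (i) $2x \in Q_G(\{x, 3x\})$; (ii) $\chi(x) \neq \pm 1/4$ (in $\mathbb{T}$) for every character $\chi$ of $G$; (iii) $\chi(2x) \neq 1/2$ (in $\mathbb{T}$) for every character $\chi$ of $G$; (iv) the subgroup $\operatorname{Tr}_{2x}(G) = \{\chi(2x) \mid \chi \text{ character of } G\}$ of $\mathbb{T}$ has no non-zero $2$-torsion elements. -/
/-!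
Everything reduces to arithmetic in `𝕋`. If `t` and `3t` both lie in `𝕋₊`, then writing `t = π(a)`
with `|a| ≤ 1/4` forces `|a| ≤ 1/12` or `a = ± 1/4`; in the first case `2t ∈ 𝕋₊`, in the second
`2t = 1/2 ∉ 𝕋₊`. Hence (i) fails exactly when some character takes a value `± 1/4` at `x`
(`mem_qcHull_iff`, via `two_nsmul_mem_Tplus` and `not_mem_Tplus_half`), which is the same as the
value `1/2` at `2x` (`two_nsmul_eq_half_iff`). For (iv), a non-zero `2`-power torsion element of the trace has a
multiple `2 ^ k • t` of order two, i.e. equal to `1/2` (`exists_pow_nsmul_eq_half`), and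
`2 ^ k • χ` is again a character.
-/

noncomputable section

/-- The circle group `𝕋 = ℝ/ℤ`. -/
abbrev Circle1 : Type := AddCircle (1 : ℝ)

/-- The canonical projection `π : ℝ → 𝕋`. -/
def circleProj (r : ℝ) : Circle1 := (r : Circle1)

/-- `𝕋₊ = π([-1/4, 1/4])`. -/
def Tplus : Set Circle1 := circleProj '' Set.Icc (-(1/4) : ℝ) (1/4)

/-- The polar `E^▷` of a set `E ⊆ G`: all continuous characters mapping `E` into `𝕋₊`. -/
def polar {G : Type} [AddCommGroup G] [TopologicalSpace G] (E : Set G) :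
    Set (G →+ Circle1) :=
  {χ | Continuous χ ∧ ∀ x ∈ E, χ x ∈ Tplus}

/-- The quasi-convex hull `Q_G(E) = E^▷◁`. -/
def qcHull {G : Type} [AddCommGroup G] [TopologicalSpace G] (E : Set G) : Set G :=
  {x | ∀ χ ∈ polar E, χ x ∈ Tplus}

/-- A set is quasi-convex if it coincides with its quasi-convex hull. -/
def IsQuasiConvex {G : Type} [AddCommGroup G] [TopologicalSpace G] (E : Set G) : Prop :=
  qcHull E = E

theorem circleProj_eq_iff (a b : ℝ) : circleProj a = circleProj b ↔ ∃ n : ℤ, a = b + n := by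
  unfold circleProj
  rw [← sub_eq_zero, ← AddCircle.coe_sub, AddCircle.coe_eq_zero_iff]
  constructor
  · rintro ⟨n, hn⟩
    exact ⟨n, by simp at hn; linarith⟩
  · rintro ⟨n, hn⟩
    exact ⟨n, by simp [hn]⟩

theorem exists_circleProj (t : Circle1) : ∃ a : ℝ, circleProj a = t :=
  QuotientAddGroup.mk_surjective t

theorem nsmul_circleProj (n : ℕ) (a : ℝ) : n • circleProj a = circleProj (n * a) := by
  unfold circleProj
  rw [← AddCircle.coe_nsmul, nsmul_eq_mul]

theorem circleProj_zero : circleProj 0 = 0 := AddCircle.coe_zero ..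

theorem neg_circleProj (a : ℝ) : -circleProj a = circleProj (-a) := (AddCircle.coe_neg ..).symm

theorem not_mem_Tplus_half : circleProj (1 / 2) ∉ Tplus := by
  rintro ⟨b, ⟨h1, h2⟩, hb⟩
  obtain ⟨n, hn⟩ := (circleProj_eq_iff _ _).1 hb
  have h3 : (-1 : ℝ) < n := by linarith
  have h4 : (n : ℝ) < 0 := by linarith
  norm_cast at h3 h4
  omega

theorem circleProj_half_ne_zero : circleProj (1 / 2) ≠ 0 := by
  intro h
  exact not_mem_Tplus_half (h ▸ ⟨0, by norm_num, circleProj_zero⟩)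

theorem two_nsmul_eq_half_iff (t : Circle1) :
    2 • t = circleProj (1 / 2) ↔ t = circleProj (1 / 4) ∨ t = -circleProj (1 / 4) := by
  constructor
  · obtain ⟨a, rfl⟩ := exists_circleProj t
    rw [nsmul_circleProj, neg_circleProj, circleProj_eq_iff, circleProj_eq_iff, circleProj_eq_iff]
    rintro ⟨n, hn⟩
    push_cast at hn
    obtain ⟨k, rfl | rfl⟩ := Int.even_or_odd' n
    · exact Or.inl ⟨k, by push_cast at hn; linarith⟩
    · exact Or.inr ⟨k + 1, by push_cast at hn ⊢; linarith⟩
  · rintro (rfl | rfl)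
    · rw [nsmul_circleProj]
      norm_num
    · rw [neg_circleProj, nsmul_circleProj, circleProj_eq_iff]
      exact ⟨-1, by norm_num⟩

theorem eq_half_of_two_nsmul_eq_zero {t : Circle1} (h : 2 • t = 0) (h0 : t ≠ 0) :
    t = circleProj (1 / 2) := by
  obtain ⟨a, rfl⟩ := exists_circleProj t
  rw [nsmul_circleProj, ← circleProj_zero, circleProj_eq_iff] at h
  rw [← circleProj_zero, Ne, circleProj_eq_iff] at h0
  rw [circleProj_eq_iff]
  obtain ⟨n, hn⟩ := h
  push_cast at hn
  obtain ⟨k, rfl | rfl⟩ := Int.even_or_odd' n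
  · exact absurd ⟨k, by push_cast at hn; linarith⟩ h0
  · exact ⟨k, by push_cast at hn; linarith⟩

theorem exists_pow_nsmul_eq_half {t : Circle1} (h0 : t ≠ 0) (l : ℕ) (h : 2 ^ l • t = 0) :
    ∃ k : ℕ, 2 ^ k • t = circleProj (1 / 2) := by
  induction l with
  | zero => simp at h; exact absurd h h0
  | succ l ih =>
    by_cases hl : 2 ^ l • t = 0
    · exact ih hl
    · refine ⟨l, eq_half_of_two_nsmul_eq_zero ?_ hl⟩
      rwa [← mul_nsmul, ← pow_succ]

theorem quarter_mem_Tplus : circleProj (1 / 4) ∈ Tplus := ⟨1 / 4, by norm_num, rfl⟩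

theorem neg_mem_Tplus {t : Circle1} (h : t ∈ Tplus) : -t ∈ Tplus := by
  obtain ⟨a, ⟨h1, h2⟩, rfl⟩ := h
  exact ⟨-a, ⟨by linarith, by linarith⟩, (neg_circleProj a).symm⟩

theorem three_nsmul_quarter : 3 • circleProj (1 / 4) = -circleProj (1 / 4) := by
  rw [nsmul_circleProj, neg_circleProj, circleProj_eq_iff]
  exact ⟨1, by norm_num⟩

/-- If `t, 3t ∈ 𝕋₊` and `2t ≠ 1/2`, then `t` is within `1/12` of `0`, so that `2t ∈ 𝕋₊`. -/
theorem two_nsmul_mem_Tplus {t : Circle1} (h1 : t ∈ Tplus) (h3 : 3 • t ∈ Tplus)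
    (h : 2 • t ≠ circleProj (1 / 2)) : 2 • t ∈ Tplus := by
  obtain ⟨a, ⟨ha1, ha2⟩, rfl⟩ := h1
  rw [nsmul_circleProj] at h3
  obtain ⟨b, ⟨hb1, hb2⟩, hb⟩ := h3
  obtain ⟨n, hn⟩ := (circleProj_eq_iff _ _).1 hb
  push_cast at hn
  rw [Ne, two_nsmul_eq_half_iff, neg_circleProj, not_or] at h
  have hn1 : n ≤ 1 := by
    have : (n : ℝ) < 2 := by linarith
    norm_cast at this
    omega
  have hn2 : -1 ≤ n := by
    have : ((-2 : ℤ) : ℝ) < n := by push_cast; linarith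
    exact Int.cast_lt.1 this
  rw [nsmul_circleProj]
  interval_cases n
  -- `b = 3a - 1` with `a ≤ 1/4`, `-1/4 ≤ b` leaves only `a = 1/4`; symmetrically for `n = 1`.
  · push_cast at hn
    exact absurd (congrArg circleProj (by linarith : a = 1 / 4)) h.1
  · push_cast at hn
    exact ⟨_, ⟨by push_cast; linarith, by push_cast; linarith⟩, rfl⟩
  · push_cast at hn
    exact absurd (congrArg circleProj (by linarith : a = -(1 / 4))) h.2

theorem mem_qcHull_iff {G : Type} [AddCommGroup G] [TopologicalSpace G] (x : G) :
    (2 • x ∈ qcHull ({x, 3 • x} : Set G)) ↔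
      (∀ χ : G →+ Circle1, Continuous χ → χ (2 • x) ≠ circleProj (1/2)) := by
  constructor
  · intro h χ hχ he
    refine not_mem_Tplus_half (he ▸ h χ ⟨hχ, ?_⟩)
    rw [map_nsmul, two_nsmul_eq_half_iff] at he
    rintro y (rfl | rfl)
    · rcases he with he | he <;> rw [he]
      · exact quarter_mem_Tplus
      · exact neg_mem_Tplus quarter_mem_Tplus
    · rcases he with he | he <;> rw [map_nsmul, he]
      · rw [three_nsmul_quarter]
        exact neg_mem_Tplus quarter_mem_Tplus
      · rw [smul_neg, three_nsmul_quarter, neg_neg]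
        exact quarter_mem_Tplus
  · rintro h χ ⟨hχ, hE⟩
    have h1 := hE x (by simp)
    have h3 := hE (3 • x) (by simp)
    have h2 := h χ hχ
    rw [map_nsmul] at h2 h3 ⊢
    exact two_nsmul_mem_Tplus h1 h3 h2

/-- For `x` in an abelian topological group `G`, the following are equivalent:
(i) `2x ∈ Q_G({x, 3x})`; (ii) `χ(x) ≠ ± 1/4` for every character `χ`;
(iii) `χ(2x) ≠ 1/2` for every character `χ`; (iv) the subgroup
`Tr_{2x}(G) = {χ(2x) | χ character}` of `𝕋` has no non-zero 2-torsion elements. -/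
theorem stmt13 {G : Type} [AddCommGroup G] [TopologicalSpace G] (x : G) :
    ((2 • x ∈ qcHull ({x, 3 • x} : Set G)) ↔
      (∀ χ : G →+ Circle1, Continuous χ →
        χ x ≠ circleProj (1/4) ∧ χ x ≠ -circleProj (1/4))) ∧
    ((2 • x ∈ qcHull ({x, 3 • x} : Set G)) ↔
      (∀ χ : G →+ Circle1, Continuous χ → χ (2 • x) ≠ circleProj (1/2))) ∧
    ((2 • x ∈ qcHull ({x, 3 • x} : Set G)) ↔
      (∀ t ∈ {t : Circle1 | ∃ χ : G →+ Circle1, Continuous χ ∧ χ (2 • x) = t},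
        (∃ l : ℕ, 2 ^ l • t = 0) → t = 0)) := by
  refine ⟨(mem_qcHull_iff x).trans ?_, mem_qcHull_iff x, (mem_qcHull_iff x).trans ?_⟩
  · refine forall_congr' fun χ => forall_congr' fun _ => ?_
    rw [map_nsmul, Ne, two_nsmul_eq_half_iff, not_or]
  · constructor
    · rintro h _ ⟨χ, hχ, rfl⟩ ⟨l, hl⟩
      by_contra h0
      obtain ⟨k, hk⟩ := exists_pow_nsmul_eq_half h0 l hl
      exact h (2 ^ k • χ) (hχ.const_smul (2 ^ k)) hk
    · intro h χ hχ he
      refine circleProj_half_ne_zero (h _ ⟨χ, hχ, he⟩ ⟨1, ?_⟩)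
      rw [nsmul_circleProj, ← circleProj_zero, circleProj_eq_iff]
      exact ⟨1, by norm_num⟩
end
end

section
/- Let $G$ be an abelian topological group and $x \in G$. If the order of $2x$ is finite and odd, then $2x \in Q_G(\{x, 3x\})$. -/
/-!
Let `χ` be a character with `χ x, χ (3x) ∈ 𝕋₊`, and lift `χ x` to `t ∈ [-1/4, 1/4]`. Then
`3t ∈ [-3/4, 3/4]` lies within `1/4` of an integer, so either `|t| ≤ 1/12`, which gives
`|2t| ≤ 1/6` and `χ (2x) ∈ 𝕋₊`, or `t = ±1/4`. In the latter case `χ (2x) = 1/2` has order two in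
`𝕋`, which is impossible because its order divides the odd order of `2x`.
-/


noncomputable section

/-- If `n • 2t` vanishes in `ℝ/ℤ` for some odd `n`, then `t` is not `±1/4`, since `n/2` is not an integer. -/
theorem not_quarter_of_odd {n : ℕ} (hn : Odd n) {t : ℝ} (h : ((n • (2 * t) : ℝ) : Circle1) = 0) :
    t ≠ 1 / 4 ∧ t ≠ -(1 / 4) := by
  obtain ⟨m, hm⟩ := hn
  obtain ⟨k, hk⟩ := (AddCircle.coe_eq_zero_iff (1 : ℝ)).1 h
  simp only [zsmul_eq_mul, nsmul_eq_mul, mul_one, hm] at hk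
  push_cast at hk
  constructor
  · rintro rfl
    have h2 : (2 * k : ℝ) = 2 * m + 1 := by linarith
    have h3 : 2 * k = 2 * (m : ℤ) + 1 := by exact_mod_cast h2
    omega
  · rintro rfl
    have h2 : (2 * k : ℝ) = -(2 * m + 1) := by linarith
    have h3 : 2 * k = -(2 * (m : ℤ) + 1) := by exact_mod_cast h2
    omega

/-- If the order of `2x` is finite and odd, then `2x ∈ Q_G({x, 3x})`. -/
theorem stmt14 {G : Type} [AddCommGroup G] [TopologicalSpace G] (x : G)
    (hfin : IsOfFinAddOrder (2 • x)) (hodd : Odd (addOrderOf (2 • x))) :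
    2 • x ∈ qcHull ({x, 3 • x} : Set G) := by
  rintro χ ⟨-, hχ⟩
  obtain ⟨t, ⟨ht1, ht2⟩, ht⟩ := hχ x (by simp)
  obtain ⟨s, ⟨hs1, hs2⟩, hs⟩ := hχ (3 • x) (by simp)
  have h2 : χ (2 • x) = ((2 * t : ℝ) : Circle1) := by
    rw [map_nsmul, ← ht, circleProj, ← AddCircle.coe_nsmul, nsmul_eq_mul, Nat.cast_ofNat]
  have hz : ((addOrderOf (2 • x) • (2 * t) : ℝ) : Circle1) = 0 := by
    rw [AddCircle.coe_nsmul, ← h2, ← map_nsmul, addOrderOf_nsmul_eq_zero, map_zero]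
  obtain ⟨hne1, hne2⟩ := not_quarter_of_odd hodd hz
  have h3 : ((3 * t - s : ℝ) : Circle1) = 0 := by
    rw [map_nsmul, ← ht, circleProj, circleProj, ← AddCircle.coe_nsmul, nsmul_eq_mul,
      Nat.cast_ofNat] at hs
    rw [AddCircle.coe_sub, hs, sub_self]
  obtain ⟨k, hk⟩ := (AddCircle.coe_eq_zero_iff (1 : ℝ)).1 h3
  rw [zsmul_eq_mul, mul_one] at hk
  have hlt : t < 1 / 4 := lt_of_le_of_ne ht2 hne1
  have hgt : -(1 / 4) < t := lt_of_le_of_ne ht1 hne2.symm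
  -- With `t` strictly inside the interval, the integer `3t - s` has absolute value below one.
  have hk1 : (k : ℝ) < 1 := by linarith
  have hk2 : (-1 : ℝ) < k := by linarith
  have hk1' : k < 1 := by exact_mod_cast hk1
  have hk2' : -1 < k := by exact_mod_cast hk2
  obtain rfl : k = 0 := by omega
  rw [Int.cast_zero] at hk
  exact ⟨2 * t, ⟨by linarith, by linarith⟩, h2.symm⟩
end
end

section
/- Let $p > 2$ be a prime and $x \in \mathbb{J}_p$ (the additive topological group of $p$-adic integers). Then $2x \in Q_{\mathbb{J}_p}(\{x, 3x\})$. -/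
/-!
Let `χ` be a character with `χ x` and `χ (3x)` in `𝕋₊`, and let `t` be its value at `x`. The
conditions `t ∈ 𝕋₊` and `3t ∈ 𝕋₊` leave only two possibilities: either `t` has a representative in
`[-1/12, 1/12]`, and then `2t ∈ 𝕋₊`, or `t = ±1/4`, so that `2t = 1/2`
(`two_nsmul_mem_Tplus_or_eq_half`). The second case does not occur for `p` odd: `pⁿ • 2x → 0` in
`𝕁_p`, so continuity gives `pⁿ • (1/2) → 0` in `𝕋`, whereas `pⁿ • (1/2) = 1/2` for every `n`
(`char_ne_half`).
-/

noncomputable section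

/-- If `3r = s + k` with `|r|, |s| ≤ 1/4` and `k` an integer, then `k ∈ {-1, 0, 1}`; this gives
`|r| ≤ 1/12` or `r = ±1/4`. -/
lemma two_nsmul_mem_Tplus_or_eq_half {t : Circle1} (h1 : t ∈ Tplus) (h3 : 3 • t ∈ Tplus) :
    2 • t ∈ Tplus ∨ 2 • t = ((1 / 2 : ℝ) : Circle1) := by
  obtain ⟨r, ⟨hr1, hr2⟩, rfl⟩ := h1
  obtain ⟨s, ⟨hs1, hs2⟩, hs⟩ := h3
  unfold circleProj at *
  have hk : ((3 * r - s : ℝ) : Circle1) = 0 := by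
    rw [AddCircle.coe_sub, hs, ← AddCircle.coe_nsmul, nsmul_eq_mul, Nat.cast_ofNat, sub_self]
  obtain ⟨k, hk⟩ := (AddCircle.coe_eq_zero_iff (1 : ℝ)).1 hk
  simp only [zsmul_eq_mul, mul_one] at hk
  have hk1 : (k : ℝ) < 2 := by linarith
  have hk2 : (-2 : ℝ) < k := by linarith
  have hk1 : k < 2 := by exact_mod_cast hk1
  have hk2 : -2 < k := by exact_mod_cast hk2
  rw [← AddCircle.coe_nsmul, nsmul_eq_mul, Nat.cast_ofNat]
  interval_cases k <;> push_cast at hk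
  · right
    have hr : 2 * r = 1 / 2 - 1 := by linarith
    rw [hr, AddCircle.coe_sub, AddCircle.coe_period, sub_zero]
  · exact Or.inl ⟨2 * r, ⟨by linarith, by linarith⟩, rfl⟩
  · right
    have hr : 2 * r = 1 / 2 := by linarith
    rw [hr]

/-- The value `1/2` is fixed by multiplication by an odd number. -/
lemma odd_nsmul_half {m : ℕ} (hm : Odd m) :
    m • ((1 / 2 : ℝ) : Circle1) = ((1 / 2 : ℝ) : Circle1) := by
  obtain ⟨k, rfl⟩ := hm
  have h2 : 2 • ((1 / 2 : ℝ) : Circle1) = 0 := by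
    rw [← AddCircle.coe_nsmul, two_nsmul, add_halves]
    exact AddCircle.coe_period 1
  rw [add_nsmul, mul_comm, mul_nsmul', h2]
  simp

lemma half_ne_zero : ((1 / 2 : ℝ) : Circle1) ≠ 0 := by
  intro h
  obtain ⟨n, hn⟩ := (AddCircle.coe_eq_zero_iff (1 : ℝ)).1 h
  simp only [zsmul_eq_mul, mul_one] at hn
  have h2 : (2 * n : ℝ) = 1 := by linarith
  have h3 : 2 * n = 1 := by exact_mod_cast h2
  omega

/-- A continuous character of `𝕁_p`, `p` odd, omits the value `1/2`, because `pⁿ • y → 0`. -/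
lemma char_ne_half {p : ℕ} [Fact p.Prime] (hp : 2 < p) (χ : ℤ_[p] →+ Circle1)
    (hχ : Continuous χ) (y : ℤ_[p]) : χ y ≠ ((1 / 2 : ℝ) : Circle1) := by
  intro hy
  have hodd : Odd p := (Fact.out : p.Prime).odd_of_ne_two hp.ne'
  have hpow : Filter.Tendsto (fun n : ℕ => (p : ℤ_[p]) ^ n) Filter.atTop (nhds 0) :=
    tendsto_pow_atTop_nhds_zero_of_norm_lt_one (by
      rw [PadicInt.norm_p]
      exact inv_lt_one_of_one_lt₀ (by exact_mod_cast (Fact.out : p.Prime).one_lt))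
  have hlim : Filter.Tendsto (fun n : ℕ => χ (p ^ n • y)) Filter.atTop (nhds 0) := by
    have h := (hχ.tendsto 0).comp (by simpa using hpow.mul_const y)
    simpa [Function.comp_def, nsmul_eq_mul] using h
  have hconst : ∀ n : ℕ, χ (p ^ n • y) = ((1 / 2 : ℝ) : Circle1) := fun n => by
    rw [map_nsmul, hy, odd_nsmul_half hodd.pow]
  simp only [hconst] at hlim
  exact half_ne_zero (tendsto_nhds_unique tendsto_const_nhds hlim)

/-- For a prime `p > 2` and `x ∈ 𝕁_p`, one has `2x ∈ Q_{𝕁_p}({x, 3x})`. -/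
theorem stmt15 (p : ℕ) [Fact p.Prime] (hp : 2 < p) (x : ℤ_[p]) :
    2 • x ∈ qcHull ({x, 3 • x} : Set ℤ_[p]) := by
  rintro χ ⟨hχ, hE⟩
  have h3 : 3 • χ x ∈ Tplus := by
    rw [← map_nsmul]
    exact hE _ (by simp)
  rw [map_nsmul]
  refine (two_nsmul_mem_Tplus_or_eq_half (hE x (by simp)) h3).resolve_right ?_
  rw [← map_nsmul]
  exact char_ne_half hp χ hχ _
end
end

section
/- Let $\underline{a}=\{a_n\}_{n=0}^\infty$ be an increasing sequence of non-negative integers with gaps $g_n = a_{n+1} - a_n$, and put $x_n = 2^{-(a_n+1)}$ (viewed in $\mathbb{T}=\mathbb{R}/\mathbb{Z}$). Suppose that $a_0 = 1$, $a_1 = 2$, $g_1 > 2$, and $g_n > 1$ for all $n \geq 2$. Then $K_{\underline{a},2} = \{0\} \cup \{\pm x_n \mid n \in \mathbb{N}\}$ is quasi-convex in $\mathbb{T}$. -/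
/-!
The characters of `𝕋` used are the multiplications by integers `j`. Such a `j` lies in the polar of
`K` as soon as every `j * xₙ` is within `1/4` of an integer, where `xₙ = 2^{-(aₙ+1)}`. With
`mₖ = 2^{aₖ-1}` for `k ≥ 2`, the polar contains

* `2^j` for every `j` which is not a term of `a`, and `mₖ`, `3 mₖ` for `k ≥ 2`;
* `1 - mₖ` and `mₖ - 7` for `k ≥ 2`.

Let `0 < r ≤ 1/4` represent a point of the hull. Choose `t` with `2/3 < 2^t r ≤ 4/3`. Then `2^{t-1} r`
is not in `𝕋₊`, so `t - 1 = aₙ` for some `n`, i.e. `r` is within `xₙ/3` of `xₙ` (`exists_term`).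
If `n ≥ 2`, the characters `mₙ` and `3 mₙ` force `r = xₙ` (`eq_of_close`). If `n ≤ 1`, put
`s = r - xₙ`. When `s ≠ 0`, the same two arguments apply to `|s|`, because high powers of two times
`xₙ` are integers, and give `s = ± xₖ` with `k ≥ 2`. The four remaining candidates
`1/4 ± xₖ`, `1/8 ± xₖ` are excluded by the characters `1`, `1 - mₖ`, `mₖ - 7` and `1 - mₖ`
respectively. For `1/8 + xₖ` this needs `7 xₖ < 1/8`, i.e. `aₖ ≥ 5`, which is where `g₁ > 2` enters.
-/

noncomputable section

/-- The real number `r` represents a point of `𝕋₊`, i.e. is within `1/4` of an integer. -/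
def Near (r : ℝ) : Prop := ∃ m : ℤ, |r - m| ≤ 1 / 4

/-- Multiplication by the integer `j` is in the polar of `K`. -/
def IsPol (a : ℕ → ℕ) (j : ℤ) : Prop := ∀ n, Near (j * ((2 : ℝ) ^ (a n + 1))⁻¹)

theorem circleProj_mem (r : ℝ) : circleProj r ∈ Tplus ↔ Near r := by
  constructor
  · rintro ⟨s, hs, h⟩
    obtain ⟨m, hm⟩ := (QuotientAddGroup.eq_iff_sub_mem.1 h : s - r ∈ AddSubgroup.zmultiples (1 : ℝ))
    have hm' : (m : ℝ) = s - r := by simpa using hm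
    refine ⟨-m, abs_le.2 ?_⟩
    push_cast
    rw [hm']
    constructor <;> linarith [hs.1, hs.2]
  · rintro ⟨m, hm⟩
    refine ⟨r - m, abs_le.1 hm, ?_⟩
    refine QuotientAddGroup.eq_iff_sub_mem.2 (AddSubgroup.mem_zmultiples_iff.2 ⟨-m, ?_⟩)
    simp

theorem Near.neg {r : ℝ} (h : Near r) : Near (-r) := by
  obtain ⟨m, hm⟩ := h
  refine ⟨-m, ?_⟩
  rw [← abs_neg]
  push_cast
  convert hm using 2
  ring

theorem Near.of_abs {r : ℝ} (h : |r| ≤ 1 / 4) : Near r := ⟨0, by simpa using h⟩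

theorem Near.add_int {r : ℝ} (h : Near r) (z : ℤ) : Near (r + z) := by
  obtain ⟨m, hm⟩ := h
  refine ⟨m + z, ?_⟩
  push_cast
  convert hm using 2
  ring

/-- The open arc `(z + 1/4, z + 3/4)` misses `𝕋₊`. -/
theorem not_near {r : ℝ} (z : ℤ) (h1 : z + 1 / 4 < r) (h2 : r < z + 3 / 4) : ¬ Near r := by
  rintro ⟨m, hm⟩
  rw [abs_le] at hm
  have h3 : (m : ℝ) < z + 1 := by linarith
  have h4 : (z : ℝ) < m := by linarith
  norm_cast at h3 h4
  omega

/-- Every `0 < s ≤ 2/3` has a leading dyadic digit: it is within `2^{-(j+1)} / 3` of `2^{-(j+1)}` for some `j`. -/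
theorem exists_digit {s : ℝ} (h0 : 0 < s) (h1 : s ≤ 2 / 3) :
    ∃ j : ℕ, 2 / 3 < 2 ^ (j + 1) * s ∧ 2 ^ (j + 1) * s ≤ 4 / 3 := by
  obtain ⟨n, hn⟩ := pow_unbounded_of_one_lt (2 / 3 / s) (one_lt_two (α := ℝ))
  have hex : ∃ n : ℕ, 2 / 3 < (2 : ℝ) ^ n * s := ⟨n, by rwa [div_lt_iff₀ h0] at hn⟩
  classical
  have hf := Nat.find_spec hex
  have hmin := fun m => Nat.find_min (m := m) hex
  generalize Nat.find hex = k at hf hmin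
  cases k with
  | zero => norm_num at hf; linarith
  | succ j =>
    refine ⟨j, hf, ?_⟩
    have := hmin j (Nat.lt_succ_self j)
    rw [pow_succ]
    linarith

/-- If `y ≤ d` are exponents, then `2^d * 2^{-y}` is an integer. -/
theorem two_pow_mul_inv {d y : ℕ} (h : y ≤ d) :
    (2 : ℝ) ^ d * ((2 : ℝ) ^ y)⁻¹ = ((2 ^ (d - y) : ℤ) : ℝ) := by
  obtain ⟨e, rfl⟩ := Nat.exists_eq_add_of_le h
  rw [Nat.add_sub_cancel_left, pow_add]
  push_cast
  field_simp

theorem two_pow_mul_inv_le {d y e : ℕ} (h : d + e ≤ y) :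
    (2 : ℝ) ^ d * ((2 : ℝ) ^ y)⁻¹ ≤ ((2 : ℝ) ^ e)⁻¹ := by
  have : (2 : ℝ) ^ (d + e) ≤ 2 ^ y := pow_le_pow_right₀ (by norm_num) h
  rw [pow_add] at this
  rw [← div_eq_mul_inv, ← one_div, div_le_div_iff₀ (by positivity) (by positivity)]
  linarith

section polar

variable {a : ℕ → ℕ}

theorem isPol_two_pow {j : ℕ} (hj : ∀ n, a n ≠ j) : IsPol a (2 ^ j) := by
  intro n
  push_cast
  rcases lt_or_gt_of_ne (hj n) with h | h
  · rw [two_pow_mul_inv h]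
    simpa using (Near.of_abs (r := 0) (by norm_num)).add_int (2 ^ (j - (a n + 1)))
  · have := two_pow_mul_inv_le (d := j) (y := a n + 1) (e := 2) (by omega)
    apply Near.of_abs
    rw [abs_of_nonneg (by positivity)]
    norm_num at this ⊢
    exact this

/-- The hypotheses on the sequence, in the form in which they are used. Only the gap `g₀ = 1` is less
than two, so any term before `aₖ` with `k ≥ 2` is smaller than `aₖ` by at least two. -/
structure Gaps (a : ℕ → ℕ) : Prop where
  mono : StrictMono a
  zero : a 0 = 1
  one : a 1 = 2
  five : ∀ k, 2 ≤ k → 5 ≤ a k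
  gap : ∀ n k, 2 ≤ k → n < k → a n + 2 ≤ a k

/-- To check `c + d * 2^{aₖ-1}` against all `xₙ`: for `n < k` only `c` matters, and for `n ≥ k` a
bound on the size is enough. -/
theorem isPol_of {k : ℕ} (ha : Gaps a) (hk : 2 ≤ k) (c d : ℤ)
    (hlt : ∀ n, n < k → Near (c * ((2 : ℝ) ^ (a n + 1))⁻¹))
    (hge : ∀ n, k ≤ n → Near ((c + d * 2 ^ (a k - 1) : ℝ) * ((2 : ℝ) ^ (a n + 1))⁻¹)) :
    IsPol a (c + d * 2 ^ (a k - 1)) := by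
  intro n
  rcases lt_or_ge n k with h | h
  · have h2 := ha.gap n k hk h
    have e := two_pow_mul_inv (d := a k - 1) (y := a n + 1) (by omega)
    have := (hlt n h).add_int (d * 2 ^ (a k - 1 - (a n + 1)))
    rw [Int.cast_mul, ← e] at this
    convert this using 1
    push_cast
    ring
  · simpa using hge n h

theorem isPol_m {k : ℕ} (ha : Gaps a) (hk : 2 ≤ k) : IsPol a (2 ^ (a k - 1)) := by
  apply isPol_two_pow
  intro n hn
  have h5 := ha.five k hk
  rcases lt_or_ge n k with h | h
  · have := ha.gap n k hk h
    omega
  · have := ha.mono.monotone h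
    omega

theorem isPol_three_m {k : ℕ} (ha : Gaps a) (hk : 2 ≤ k) : IsPol a (3 * 2 ^ (a k - 1)) := by
  have h5 := ha.five k hk
  have := isPol_of ha hk 0 3 (fun n _ => Near.of_abs (by norm_num)) ?_
  · simpa using this
  intro n hn
  rcases hn.eq_or_lt with rfl | hn
  · refine ⟨1, ?_⟩
    obtain ⟨b, hb⟩ : ∃ b, a k = b + 1 := ⟨a k - 1, by omega⟩
    have : (2 : ℝ) ^ (a k - 1) * (2 ^ (a k + 1))⁻¹ = 1 / 4 := by
      rw [hb, Nat.add_sub_cancel, pow_add, pow_add]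
      field_simp
      norm_num
    push_cast
    rw [zero_add, mul_assoc, this]
    norm_num [abs_le]
  · have h2 := ha.gap k n (by omega) hn
    have := two_pow_mul_inv_le (d := a k - 1) (y := a n + 1) (e := 4) (by omega)
    apply Near.of_abs
    rw [abs_of_nonneg (by positivity)]
    push_cast
    norm_num at this ⊢
    linarith

/-- A character `mₖ - c` with `0 ≤ c ≤ 16 ≤ mₖ` takes values in `[0, 1/4]` at `xₙ`, `n ≥ k`. -/
theorem near_m_sub {k n : ℕ} (ha : Gaps a) (hk : 2 ≤ k) (hn : k ≤ n) {c : ℝ} (h0 : 0 ≤ c)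
    (h1 : c ≤ 16) : Near ((2 ^ (a k - 1) - c) * ((2 : ℝ) ^ (a n + 1))⁻¹) := by
  have h5 := ha.five k hk
  have hm := ha.mono.monotone hn
  have h16 : (2 : ℝ) ^ 4 ≤ 2 ^ (a k - 1) := pow_le_pow_right₀ (by norm_num) (by omega)
  have hle := two_pow_mul_inv_le (d := a k - 1) (y := a n + 1) (e := 2) (by omega)
  have hp : (0 : ℝ) < (2 ^ (a n + 1))⁻¹ := by positivity
  apply Near.of_abs
  rw [abs_of_nonneg (mul_nonneg (by linarith) hp.le)]
  norm_num at hle ⊢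
  nlinarith

theorem isPol_one_sub {k : ℕ} (ha : Gaps a) (hk : 2 ≤ k) : IsPol a (1 - 2 ^ (a k - 1)) := by
  have := isPol_of ha hk 1 (-1) ?_ ?_
  · simpa [sub_eq_add_neg] using this
  · intro n _
    have h : 1 ≤ a n := ha.zero ▸ ha.mono.monotone (Nat.zero_le n)
    have := two_pow_mul_inv_le (d := 0) (y := a n + 1) (e := 2) (by omega)
    apply Near.of_abs
    rw [abs_of_nonneg (by positivity)]
    norm_num at this ⊢
    exact this
  · intro n hn
    convert (near_m_sub ha hk hn (c := 1) (by norm_num) (by norm_num)).neg using 1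
    push_cast
    ring

theorem isPol_sub_seven {k : ℕ} (ha : Gaps a) (hk : 2 ≤ k) : IsPol a (2 ^ (a k - 1) - 7) := by
  have := isPol_of ha hk (-7) 1 ?_ ?_
  · convert this using 1
    ring
  · intro n _
    rcases lt_or_ge n 2 with h | h
    · interval_cases n
      · exact ⟨-2, by rw [ha.zero]; norm_num [abs_le]⟩
      · exact ⟨-1, by rw [ha.one]; norm_num [abs_le]⟩
    · have := ha.five n h
      have := two_pow_mul_inv_le (d := 0) (y := a n + 1) (e := 6) (by omega)
      apply Near.of_abs
      rw [abs_mul, abs_of_nonneg (a := (2 ^ (a n + 1))⁻¹) (by positivity)]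
      norm_num at this ⊢
      linarith
  · intro n hn
    convert near_m_sub ha hk hn (c := 7) (by norm_num) (by norm_num) using 1
    push_cast
    ring

/-- If the powers `2^j` in the polar do not detect a leading dyadic digit of `s` at place `j + 1`, then
this digit sits at a place `aₙ + 1`. -/
theorem exists_term {s : ℝ} (h0 : 0 < s) (h1 : s ≤ 2 / 3)
    (H : ∀ j : ℕ, 2 / 3 < 2 ^ (j + 1) * s → (∀ n, a n ≠ j) → Near (2 ^ j * s)) :
    ∃ n, 2 / 3 < 2 ^ (a n + 1) * s ∧ 2 ^ (a n + 1) * s ≤ 4 / 3 := by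
  obtain ⟨j, hj1, hj2⟩ := exists_digit h0 h1
  by_contra hc
  have hj : ∀ n, a n ≠ j := by
    rintro n rfl
    exact hc ⟨n, hj1, hj2⟩
  refine not_near 0 ?_ ?_ (H j hj1 hj) <;> rw [pow_succ] at hj1 hj2 <;> push_cast <;> linarith

/-- The two characters `mₖ` and `3 mₖ` pin down the exact value of a number close to `xₖ`. -/
theorem eq_of_close {k : ℕ} {s : ℝ} (hk : 1 ≤ a k) (h1 : 2 / 3 < 2 ^ (a k + 1) * s)
    (h2 : 2 ^ (a k + 1) * s ≤ 4 / 3) (H1 : Near (2 ^ (a k - 1) * s))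
    (H3 : Near (3 * (2 ^ (a k - 1) * s))) : 2 ^ (a k - 1) * s = 1 / 4 := by
  have e : (2 : ℝ) ^ (a k + 1) * s = 4 * (2 ^ (a k - 1) * s) := by
    rw [show a k + 1 = (a k - 1) + 2 by omega, pow_add]
    ring
  rw [e] at h1 h2
  generalize (2 : ℝ) ^ (a k - 1) * s = u at *
  rcases lt_trichotomy u (1 / 4) with h | h | h
  · exact absurd H3 (not_near 0 (by push_cast; linarith) (by push_cast; linarith))
  · exact h
  · exact absurd H1 (not_near 0 (by push_cast; linarith) (by push_cast; linarith))

/-- The second digit: if `r = xₙ + ε s` with `ε = ± 1` and `n ≤ 1` lies in the hull, where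
`0 < s ≤ xₙ / 3` and `s ≤ 1/12`, then `s = xₖ` for some `k ≥ 2`, in the form `mₖ s = 1/4`. The bound
`1/12 = 2/3 * x₁` rules out the digits at `x₀` and `x₁`. -/
theorem second_digit (ha : Gaps a) {r s ε : ℝ} (H : ∀ j : ℤ, IsPol a j → Near (j * r)) {n : ℕ}
    (hn : n ≤ 1) (hε : ε = 1 ∨ ε = -1) (hr : r = ((2 : ℝ) ^ (a n + 1))⁻¹ + ε * s) (h0 : 0 < s)
    (h1 : 3 * 2 ^ (a n + 1) * s ≤ 1) (h12 : s ≤ 1 / 12) :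
    ∃ k, 2 ≤ k ∧ 2 ^ (a k - 1) * s = 1 / 4 := by
  -- multiples of `2 ^ (aₙ + 1)` only see `s`
  have key : ∀ (j : ℕ) (c : ℤ), a n + 1 ≤ j → IsPol a (c * 2 ^ j) → Near (c * (2 ^ j * s)) := by
    intro j c hj hp
    have := (H _ hp).add_int (-(c * 2 ^ (j - (a n + 1))))
    rw [Int.cast_neg, Int.cast_mul c (2 ^ (j - (a n + 1))), ← two_pow_mul_inv hj, hr] at this
    rcases hε with rfl | rfl
    · convert this using 1
      push_cast
      ring
    · convert this.neg using 1
      push_cast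
      ring
  have hlo : ∀ j : ℕ, 2 / 3 < 2 ^ (j + 1) * s → a n + 1 ≤ j := by
    intro j hj
    by_contra hlt
    have : (2 : ℝ) ^ (j + 1) ≤ 2 ^ (a n + 1) := pow_le_pow_right₀ (by norm_num) (by omega)
    nlinarith
  obtain ⟨k, hk1, hk2⟩ := exists_term (a := a) h0 (by linarith) (fun j hj hne => by
    have := key j 1 (hlo j hj) (by simpa using isPol_two_pow hne)
    simpa using this)
  have hk : 2 ≤ k := by
    by_contra hlt
    have h01 : k = 0 ∨ k = 1 := by omega
    rcases h01 with rfl | rfl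
    · rw [ha.zero] at hk1; norm_num at hk1; linarith
    · rw [ha.one] at hk1; norm_num at hk1; linarith
  have hg := ha.gap n k hk (by omega)
  refine ⟨k, hk, eq_of_close (by omega) hk1 hk2 ?_ ?_⟩
  · simpa using key (a k - 1) 1 (by omega) (by simpa using isPol_m ha hk)
  · simpa using key (a k - 1) 3 (by omega) (isPol_three_m ha hk)

/-- The positive part of the hull. -/
theorem hull_pos (ha : Gaps a) {r : ℝ} (H : ∀ j : ℤ, IsPol a j → Near (j * r)) (h0 : 0 < r)
    (h4 : r ≤ 1 / 4) : ∃ n, r = ((2 : ℝ) ^ (a n + 1))⁻¹ := by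
  obtain ⟨n, hn1, hn2⟩ := exists_term (a := a) h0 (by linarith) (fun j _ hne => by
    simpa using H _ (isPol_two_pow hne))
  refine ⟨n, ?_⟩
  rcases lt_or_ge n 2 with hn | hn
  · -- `1 / 4` and `1 / 8` are integers after multiplication by `mₖ`
    have hdiv : ∀ k, 2 ≤ k → ∃ z : ℤ, (2 : ℝ) ^ (a k - 1) = 8 * z ∧ 2 ≤ z := by
      intro k hk
      have := ha.five k hk
      obtain ⟨b, hb⟩ : ∃ b, a k - 1 = b + 4 := ⟨a k - 5, by omega⟩
      refine ⟨2 * 2 ^ b, ?_, ?_⟩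
      · rw [hb, pow_add]; push_cast; ring
      · have : (1 : ℤ) ≤ 2 ^ b := one_le_pow₀ (by norm_num)
        omega
    interval_cases n
    · rw [ha.zero] at hn1 hn2 ⊢
      norm_num at hn1 hn2 ⊢
      by_contra hne
      have hlt : r < 1 / 4 := lt_of_le_of_ne h4 (by simpa using hne)
      obtain ⟨k, hk, hs⟩ := second_digit ha (s := 1 / 4 - r) (ε := -1) H (n := 0) (by norm_num)
        (Or.inr rfl) (by rw [ha.zero]; ring) (by linarith) (by rw [ha.zero]; linarith)
        (by linarith)
      have hN := H _ (isPol_one_sub ha hk)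
      obtain ⟨z, hz, hz2⟩ := hdiv k hk
      have hz2' : (2 : ℝ) ≤ z := by exact_mod_cast hz2
      push_cast at hN
      rw [hz] at hN hs
      refine not_near (-2 * z) ?_ ?_ hN <;> push_cast <;> nlinarith
    · rw [ha.one] at hn1 hn2 ⊢
      norm_num at hn1 hn2 ⊢
      by_contra hne
      rcases lt_or_gt_of_ne hne with hlt | hlt
      · obtain ⟨k, hk, hs⟩ := second_digit ha (s := 1 / 8 - r) (ε := -1) H (n := 1) le_rfl
          (Or.inr rfl) (by rw [ha.one]; ring) (by linarith) (by rw [ha.one]; linarith)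
          (by linarith)
        have hN := H _ (isPol_one_sub ha hk)
        obtain ⟨z, hz, hz2⟩ := hdiv k hk
        have hz2' : (2 : ℝ) ≤ z := by exact_mod_cast hz2
        push_cast at hN
        rw [hz] at hN hs
        refine not_near (-z) ?_ ?_ hN <;> push_cast <;> nlinarith
      · obtain ⟨k, hk, hs⟩ := second_digit ha (s := r - 1 / 8) (ε := 1) H (n := 1) le_rfl
          (Or.inl rfl) (by rw [ha.one]; ring) (by linarith) (by rw [ha.one]; linarith)
          (by linarith)
        have hN := H _ (isPol_sub_seven ha hk)
        obtain ⟨z, hz, hz2⟩ := hdiv k hk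
        have hz2' : (2 : ℝ) ≤ z := by exact_mod_cast hz2
        push_cast at hN
        rw [hz] at hN hs
        refine not_near (z - 1) ?_ ?_ hN <;> push_cast <;> nlinarith
  · have h5 := ha.five n hn
    have := eq_of_close (by omega) hn1 hn2 (by simpa using H _ (isPol_m ha hn))
      (by simpa [mul_assoc] using H _ (isPol_three_m ha hn))
    apply eq_inv_of_mul_eq_one_right
    rw [show a n + 1 = (a n - 1) + 2 by omega, pow_add]
    linarith

end polar

/-- If `a₀ = 1`, `a₁ = 2`, `g₁ > 2`, and `gₙ > 1` for all `n ≥ 2`, then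
`K_{a,2}` is quasi-convex in `𝕋`. -/
theorem stmt16 (a : ℕ → ℕ) (ha : StrictMono a)
    (h0 : a 0 = 1) (h1 : a 1 = 2) (hg1 : 2 < a 2 - a 1)
    (hg : ∀ n : ℕ, 2 ≤ n → 1 < a (n + 1) - a n) :
    IsQuasiConvex ({0} ∪ {x : Circle1 | ∃ n : ℕ,
        x = circleProj (((2 : ℝ) ^ (a n + 1))⁻¹) ∨
        x = -circleProj (((2 : ℝ) ^ (a n + 1))⁻¹)}) := by
  have hG : Gaps a := by
    have h5 : ∀ k, 2 ≤ k → 5 ≤ a k := fun k hk => by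
      have := ha.monotone hk
      omega
    refine ⟨ha, h0, h1, h5, fun n k hk hnk => ?_⟩
    obtain ⟨l, rfl⟩ : ∃ l, k = l + 1 := ⟨k - 1, by omega⟩
    have hm := ha.monotone (Nat.lt_succ_iff.1 hnk)
    rcases hk.eq_or_lt with h | h
    · obtain rfl : l = 1 := by omega
      have : a (1 + 1) = a 2 := rfl
      omega
    · have := hg l (by omega)
      omega
  refine Set.Subset.antisymm ?_ fun x hx χ hχ => hχ.2 x hx
  intro x hx
  obtain ⟨r, rfl⟩ := QuotientAddGroup.mk_surjective x
  have hmul : ∀ (j : ℤ) (s : ℝ), j • circleProj s = circleProj (j * s) := by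
    intro j s
    simp [circleProj]
  have H : ∀ j : ℤ, IsPol a j → Near (j * r) := by
    intro j hj
    rw [← circleProj_mem, ← hmul]
    refine hx (zsmulAddGroupHom j) ⟨continuous_zsmul j, ?_⟩
    have hT : ∀ n, circleProj (j * ((2 : ℝ) ^ (a n + 1))⁻¹) ∈ Tplus := fun n =>
      (circleProj_mem _).2 (hj n)
    have hT' : ∀ n, circleProj (-(j * ((2 : ℝ) ^ (a n + 1))⁻¹)) ∈ Tplus := fun n =>
      (circleProj_mem _).2 (hj n).neg
    rintro y (rfl | ⟨n, rfl | rfl⟩)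
    · simpa [circleProj] using (circleProj_mem 0).2 (Near.of_abs (by norm_num))
    · simpa [hmul] using hT n
    · have := hT' n
      rw [zsmulAddGroupHom_apply, smul_neg, hmul]
      simpa only [circleProj, AddCircle.coe_neg] using this
  -- a representative of the point in `[-1/4, 1/4]`
  obtain ⟨m, hm⟩ : Near r := by
    have hne : ∀ n, a n ≠ 0 := fun n => by
      have := ha.monotone (Nat.zero_le n)
      omega
    simpa using H _ (isPol_two_pow hne)
  have H' : ∀ j : ℤ, IsPol a j → Near (j * (r - m)) := by
    intro j hj
    convert (H j hj).add_int (-(j * m)) using 1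
    push_cast
    ring
  have hr : circleProj (r - m) = (r : Circle1) :=
    QuotientAddGroup.eq_iff_sub_mem.2 (AddSubgroup.mem_zmultiples_iff.2 ⟨-m, by simp⟩)
  change (r : Circle1) ∈ _
  rw [← hr]
  generalize r - m = s at hm H'
  rw [abs_le] at hm
  rcases lt_trichotomy s 0 with hs | rfl | hs
  · obtain ⟨n, hn⟩ := hull_pos hG (r := -s)
      (fun j hj => by simpa only [mul_neg] using (H' j hj).neg) (by linarith) (by linarith)
    refine Or.inr ⟨n, Or.inr ?_⟩
    rw [← hn]
    simp [circleProj]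
  · exact Or.inl (by simp [circleProj])
  · obtain ⟨n, hn⟩ := hull_pos hG H' hs hm.2
    exact Or.inr ⟨n, Or.inl (by rw [hn])⟩
end
end

section
/- Let $Y \subseteq \mathbb{T}$ be a symmetric set (i.e., $Y = -Y$), let $m \in \mathbb{N} \setminus \{0\}$, and let $k$ be an integer with $0 < k \leq 2m$. If $Y \subseteq \mathbb{T}_m$ and $kY = \{ky \mid y \in Y\}$ is quasi-convex in $\mathbb{T}$, then $Y$ is quasi-convex in $\mathbb{T}$. -/
/-!
Let `x` lie in the quasi-convex hull of `Y ⊆ 𝕋ₘ`. The characters `y ↦ j y` with `1 ≤ j ≤ m` belong to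
the polar of `Y`, so all `j x` lie in `𝕋₊`, and this forces `x ∈ 𝕋ₘ` (`mem_Tm_of_nsmul_mem_Tplus`).
Pulling characters back along `y ↦ k y` shows that `k x` lies in the hull of `k Y`, hence
`k x = k y` for some `y ∈ Y`. With representatives `a, b ∈ [-1/(4m), 1/(4m)]` of `x` and `y`,
the integer `k (a - b)` has absolute value at most `2m · 1/(2m) = 1`. If it is `0` then `x = y`; if it
is `±1` then `a` and `b` are opposite endpoints of the interval, so `x = -y ∈ Y` by symmetry.
-/

noncomputable section

/-- For `m ≥ 1`, put `𝕋ₘ = π([-1/(4m), 1/(4m)])`. -/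
def Tm (m : ℕ) : Set Circle1 := circleProj '' Set.Icc (-(1 / (4 * (m : ℝ)))) (1 / (4 * (m : ℝ)))

theorem circle_coe_eq_iff (a b : ℝ) :
    (a : Circle1) = (b : Circle1) ↔ ∃ n : ℤ, (n : ℝ) = a - b := by
  rw [← sub_eq_zero, ← AddCircle.coe_sub, AddCircle.coe_eq_zero_iff]
  simp

theorem coe_mem_Tplus_iff (a : ℝ) : (a : Circle1) ∈ Tplus ↔ ∃ n : ℤ, |a - n| ≤ 1 / 4 := by
  constructor
  · rintro ⟨r, hr, hra⟩
    obtain ⟨n, hn⟩ := (circle_coe_eq_iff a r).1 hra.symm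
    exact ⟨n, by rw [hn, sub_sub_cancel]; exact abs_le.2 hr⟩
  · rintro ⟨n, hn⟩
    exact ⟨a - n, abs_le.1 hn, (circle_coe_eq_iff _ _).2 ⟨-n, by push_cast; ring⟩⟩

theorem mem_Tm_iff (m : ℕ) (x : Circle1) :
    x ∈ Tm m ↔ ∃ a : ℝ, |a| ≤ 1 / (4 * (m : ℝ)) ∧ (a : Circle1) = x := by
  simp only [Tm, circleProj, Set.mem_image, Set.mem_Icc, abs_le]

theorem nsmul_mem_Tplus_of_mem_Tm {m j : ℕ} (hm : 0 < m) (hj : j ≤ m) {x : Circle1}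
    (hx : x ∈ Tm m) : j • x ∈ Tplus := by
  obtain ⟨a, ha, rfl⟩ := (mem_Tm_iff m x).1 hx
  rw [← AddCircle.coe_nsmul, coe_mem_Tplus_iff]
  refine ⟨0, ?_⟩
  have hm' : (0 : ℝ) < m := by exact_mod_cast hm
  have hj' : (j : ℝ) ≤ m := by exact_mod_cast hj
  rw [le_div_iff₀ (by positivity)] at ha
  rw [Int.cast_zero, sub_zero, nsmul_eq_mul, abs_mul, Nat.abs_cast]
  nlinarith [abs_nonneg a]

/-- The bound on a representative improves from `1/(4j)` to `1/(4(j+1))` at each step: once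
`|a| ≤ 1/(4j)`, the number `(j+1) a` has absolute value at most `1/2 < 3/4`, so the only integer it
can be within `1/4` of is `0`. -/
theorem mem_Tm_of_nsmul_mem_Tplus {m : ℕ} (hm : 0 < m) {x : Circle1}
    (hx : ∀ j : ℕ, 1 ≤ j → j ≤ m → j • x ∈ Tplus) : x ∈ Tm m := by
  obtain ⟨a, ha, hax⟩ : x ∈ Tplus := by simpa using hx 1 le_rfl hm
  subst hax
  have key : ∀ j : ℕ, 1 ≤ j → j ≤ m → (j : ℝ) * |a| ≤ 1 / 4 := by
    intro j hj
    induction j, hj using Nat.le_induction with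
    | base => intro _; simpa using abs_le.2 ha
    | succ j hj ih =>
      intro hjm
      have h := ih (by omega)
      have hj' : (1 : ℝ) ≤ j := by exact_mod_cast hj
      have h1 := hx (j + 1) (by omega) hjm
      rw [circleProj, ← AddCircle.coe_nsmul, coe_mem_Tplus_iff] at h1
      obtain ⟨n, hn⟩ := h1
      have hle : |(j + 1) • a| ≤ 1 / 2 := by
        rw [nsmul_eq_mul, abs_mul, Nat.abs_cast]
        push_cast
        nlinarith [abs_nonneg a]
      have hn0 : n = 0 := by
        rw [abs_le] at hn hle
        have h2 : (n : ℝ) < 1 := by linarith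
        have h3 : (-1 : ℝ) < n := by linarith
        have h2' : n < 1 := by exact_mod_cast h2
        have h3' : -1 < n := by exact_mod_cast h3
        omega
      simpa [hn0, nsmul_eq_mul, abs_mul, Nat.abs_cast, -Nat.cast_add] using hn
  refine (mem_Tm_iff m _).2 ⟨a, ?_, rfl⟩
  have hm' : (0 : ℝ) < m := by exact_mod_cast hm
  rw [le_div_iff₀ (by positivity)]
  linarith [key m hm le_rfl]

/-- On `𝕋ₘ`, multiplication by `k ≤ 2m` is injective up to sign: the only possible collision is
between the two endpoints. -/
theorem eq_or_eq_neg_of_zsmul_eq {m : ℕ} (hm : 0 < m) {k : ℤ} (hk0 : 0 < k)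
    (hk : k ≤ 2 * (m : ℤ)) {x y : Circle1} (hx : x ∈ Tm m) (hy : y ∈ Tm m)
    (h : k • x = k • y) : x = y ∨ x = -y := by
  obtain ⟨a, ha, rfl⟩ := (mem_Tm_iff m x).1 hx
  obtain ⟨b, hb, rfl⟩ := (mem_Tm_iff m y).1 hy
  rw [← AddCircle.coe_zsmul, ← AddCircle.coe_zsmul, circle_coe_eq_iff] at h
  obtain ⟨n, hn⟩ := h
  rw [zsmul_eq_mul, zsmul_eq_mul, ← mul_sub] at hn
  have hm' : (0 : ℝ) < m := by exact_mod_cast hm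
  have hk0' : (0 : ℝ) < k := by exact_mod_cast hk0
  have hk' : (k : ℝ) ≤ 2 * m := by exact_mod_cast hk
  obtain ⟨c, hc⟩ : ∃ c : ℝ, c = 1 / (4 * (m : ℝ)) := ⟨_, rfl⟩
  have hc0 : 0 < c := by rw [hc]; positivity
  have hkc : (k : ℝ) * (2 * c) ≤ 1 := by
    have : 4 * (m : ℝ) * c = 1 := by rw [hc]; field_simp
    nlinarith
  rw [← hc, abs_le] at ha hb
  have hn1 : (n : ℝ) ≤ 1 := by nlinarith
  have hn2 : (-1 : ℝ) ≤ n := by nlinarith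
  have hn1' : n ≤ 1 := by exact_mod_cast hn1
  have hn2' : -1 ≤ n := by exact_mod_cast hn2
  obtain rfl | rfl | rfl : n = -1 ∨ n = 0 ∨ n = 1 := by omega
  · right
    have h1 : 2 * c ≤ b - a := by
      refine le_of_mul_le_mul_left ?_ hk0'
      push_cast at hn
      linarith
    rw [← AddCircle.coe_neg]
    congr 1
    linarith
  · left
    have h1 : a - b = 0 := by
      have h2 : (k : ℝ) * (a - b) = 0 := by simpa using hn.symm
      exact (mul_eq_zero.1 h2).resolve_left hk0'.ne'
    rw [sub_eq_zero.1 h1]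
  · right
    have h1 : 2 * c ≤ a - b := by
      refine le_of_mul_le_mul_left ?_ hk0'
      push_cast at hn
      linarith
    rw [← AddCircle.coe_neg]
    congr 1
    linarith

/-- If `Y ⊆ 𝕋ₘ` is symmetric, `0 < k ≤ 2m`, and `kY` is quasi-convex in `𝕋`,
then `Y` is quasi-convex in `𝕋`. -/
theorem stmt17 (Y : Set Circle1) (hsym : Y = -Y) (m : ℕ) (hm : 0 < m)
    (k : ℤ) (hk0 : 0 < k) (hk : k ≤ 2 * (m : ℤ))
    (hYm : Y ⊆ Tm m) (hqc : IsQuasiConvex ((fun y => k • y) '' Y)) :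
    IsQuasiConvex Y := by
  refine Set.Subset.antisymm (fun x hx => ?_) (fun x hx χ hχ => hχ.2 x hx)
  have hxm : x ∈ Tm m := by
    refine mem_Tm_of_nsmul_mem_Tplus hm fun j _ hj => ?_
    exact hx (nsmulAddMonoidHom j)
      ⟨continuous_nsmul j, fun y hy => nsmul_mem_Tplus_of_mem_Tm hm hj (hYm hy)⟩
  have hkx : k • x ∈ (fun y => k • y) '' Y := by
    rw [← hqc]
    intro χ hχ
    exact hx (χ.comp (zsmulAddGroupHom k))
      ⟨hχ.1.comp (continuous_zsmul k), fun y hy => hχ.2 _ ⟨y, hy, rfl⟩⟩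
  obtain ⟨y, hy, hyx⟩ := hkx
  obtain rfl | rfl := eq_or_eq_neg_of_zsmul_eq hm hk0 hk hxm (hYm hy) hyx.symm
  · exact hy
  · rw [hsym]
    exact Set.neg_mem_neg.2 hy
end
end
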